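/- Let k_d > 0, T_I > 0, h₀, h₁ ∈ ℝ³, and let k_p : [0,∞) → [0,1] be continuously differentiable with k_p(0) = 0, 0 ≤ k_p'(s) ≤ k_d/(2T_I²) for all s, and k_p'(s) = 0 for s ≥ T_I. Then there exists a constant C > 0, depending only on k_d and T_I, such that for every continuously differentiable ℓ : [0,∞) → ℝ³, setting h(t) = h₀ + ∫₀ᵗ ℓ(s) ds, one has for every t ≥ 0: |∫₀ᵗ k_p(s)(h₁ − h(s))·ℓ'(s) ds| ≤ C( |h₁ − h₀|² + k_p(t)|h₁ − h(t)|² + |ℓ(t)|² + ∫₀ᵗ |ℓ(s)|² ds ). -/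

import Mathlib

open MeasureTheory
open scoped RealInnerProductSpace

noncomputable section

theorem cs_aux (f : ℝ → EuclideanSpace ℝ (Fin 3)) (hf : Continuous f) (s : ℝ) (hs : 0 ≤ s) :
    ‖∫ x in (0:ℝ)..s, f x‖ ^ 2 ≤ s * ∫ x in (0:ℝ)..s, ‖f x‖ ^ 2 := by
  rcases hs.eq_or_lt with rfl | hs'
  · simp
  have h1 : ‖∫ x in (0:ℝ)..s, f x‖ ≤ ∫ x in (0:ℝ)..s, ‖f x‖ :=
    intervalIntegral.norm_integral_le_integral_norm hs
  set I := ∫ x in (0:ℝ)..s, ‖f x‖ with hI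
  set Q := ∫ x in (0:ℝ)..s, ‖f x‖ ^ 2 with hQ
  have h2 : ∫ x in (0:ℝ)..s, (2 * s * I * ‖f x‖ - I ^ 2) ≤ ∫ x in (0:ℝ)..s, s ^ 2 * ‖f x‖ ^ 2 := by
    apply intervalIntegral.integral_mono_on hs
    · exact Continuous.intervalIntegrable (by fun_prop) _ _
    · exact Continuous.intervalIntegrable (by fun_prop) _ _
    · intro x _
      nlinarith [sq_nonneg (s * ‖f x‖ - I)]
  rw [intervalIntegral.integral_sub (Continuous.intervalIntegrable (by fun_prop) _ _)
    (Continuous.intervalIntegrable (by fun_prop) _ _), intervalIntegral.integral_const_mul,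
    intervalIntegral.integral_const_mul, intervalIntegral.integral_const, ← hI, ← hQ] at h2
  simp only [sub_zero, smul_eq_mul] at h2
  have h3 : s * I ^ 2 ≤ s * (s * Q) := by nlinarith
  have h4 := le_of_mul_le_mul_left h3 hs'
  have h5 : ‖∫ x in (0:ℝ)..s, f x‖ ^ 2 ≤ I ^ 2 := by gcongr
  linarith

/-- Bound on the feedback term in Lemma 3.3 (case k = 0): under the hypotheses (hypkp) on
`k_p`, there is a constant `C > 0` depending only on `k_d` and `T_I` such that for every
`C¹` velocity `ℓ`, with `h t = h₀ + ∫₀ᵗ ℓ`, for every `t ≥ 0`,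
`|∫₀ᵗ k_p (h₁−h)·ℓ'| ≤ C(|h₁−h₀|² + k_p(t)|h₁−h(t)|² + |ℓ(t)|² + ∫₀ᵗ |ℓ|²)`. -/
theorem stmt16 (kd TI : ℝ) (hkd : 0 < kd) (hTI : 0 < TI) :
    ∃ C > (0:ℝ), ∀ (h₀ h₁ : EuclideanSpace ℝ (Fin 3)) (kp kp' : ℝ → ℝ),
      (∀ s : ℝ, HasDerivAt kp (kp' s) s) → Continuous kp' → kp 0 = 0 →
      (∀ s : ℝ, 0 ≤ s → kp s ∈ Set.Icc (0:ℝ) 1) →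
      (∀ s : ℝ, 0 ≤ s → 0 ≤ kp' s ∧ kp' s ≤ kd / (2 * TI ^ 2)) →
      (∀ s : ℝ, TI ≤ s → kp' s = 0) →
      ∀ (ℓ ℓ' : ℝ → EuclideanSpace ℝ (Fin 3)),
      (∀ s : ℝ, HasDerivAt ℓ (ℓ' s) s) → Continuous ℓ' →
      ∀ h : ℝ → EuclideanSpace ℝ (Fin 3),
      (∀ t : ℝ, h t = h₀ + ∫ s in (0:ℝ)..t, ℓ s) →
      ∀ t : ℝ, 0 ≤ t →
        |∫ s in (0:ℝ)..t, kp s * ⟪h₁ - h s, ℓ' s⟫|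
          ≤ C * (‖h₁ - h₀‖ ^ 2 + kp t * ‖h₁ - h t‖ ^ 2 + ‖ℓ t‖ ^ 2
              + ∫ s in (0:ℝ)..t, ‖ℓ s‖ ^ 2) := by
  set M := kd / (2 * TI ^ 2) with hM
  have hM0 : 0 < M := by positivity
  refine ⟨2 + TI + M, by positivity, ?_⟩
  intro h₀ h₁ kp kp' hkp hkp'c hkp0 hkp01 hkp'b hkp'T ℓ ℓ' hℓ hℓ'c h hh t ht
  have hℓc : Continuous ℓ := continuous_iff_continuousAt.2 fun s => (hℓ s).continuousAt
  have hkpc : Continuous kp := continuous_iff_continuousAt.2 fun s => (hkp s).continuousAt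
  have hhd : ∀ s, HasDerivAt h (ℓ s) s := by
    intro s
    have := (intervalIntegral.integral_hasDerivAt_right (hℓc.intervalIntegrable 0 s)
      (hℓc.stronglyMeasurableAtFilter _ _) hℓc.continuousAt).const_add h₀
    exact this.congr_of_eventuallyEq (Filter.Eventually.of_forall hh)
  have hhc : Continuous h := continuous_iff_continuousAt.2 fun s => (hhd s).continuousAt
  set L := ∫ s in (0:ℝ)..t, ‖ℓ s‖ ^ 2 with hL
  have hL0 : 0 ≤ L := intervalIntegral.integral_nonneg ht fun s _ => by positivity
  have hG : ∀ s, HasDerivAt (fun s => kp s * ⟪h₁ - h s, ℓ s⟫)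
      (kp' s * ⟪h₁ - h s, ℓ s⟫ + kp s * (⟪h₁ - h s, ℓ' s⟫ + ⟪-ℓ s, ℓ s⟫)) s := fun s =>
    (hkp s).mul (((hhd s).const_sub h₁).inner ℝ (hℓ s))
  have hFTC := intervalIntegral.integral_eq_sub_of_hasDerivAt (a := 0) (b := t)
    (fun s _ => hG s) (Continuous.intervalIntegrable (by fun_prop) _ _)
  have hK := intervalIntegral.integral_eq_sub_of_hasDerivAt (a := 0) (b := t)
    (fun s _ => hkp s) (hkp'c.intervalIntegrable _ _)
  have hsplit : ∫ s in (0:ℝ)..t, kp s * ⟪h₁ - h s, ℓ' s⟫ =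
      kp t * ⟪h₁ - h t, ℓ t⟫ - ∫ s in (0:ℝ)..t, (kp' s * ⟪h₁ - h s, ℓ s⟫ - kp s * ‖ℓ s‖ ^ 2) := by
    have e : kp t * ⟪h₁ - h t, ℓ t⟫ = ∫ s in (0:ℝ)..t,
        (kp' s * ⟪h₁ - h s, ℓ s⟫ + kp s * (⟪h₁ - h s, ℓ' s⟫ + ⟪-ℓ s, ℓ s⟫)) := by
      rw [hFTC, hkp0]; ring
    rw [e, ← intervalIntegral.integral_sub (Continuous.intervalIntegrable (by fun_prop) _ _)
      (Continuous.intervalIntegrable (by fun_prop) _ _)]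
    congr 1
    ext s
    rw [inner_neg_left, real_inner_self_eq_norm_sq]
    ring
  have hR : ‖∫ s in (0:ℝ)..t, (kp' s * ⟪h₁ - h s, ℓ s⟫ - kp s * ‖ℓ s‖ ^ 2)‖ ≤
      ∫ s in (0:ℝ)..t, (kp' s * (‖h₁ - h₀‖ ^ 2 + TI * L) + (M / 2 + 1) * ‖ℓ s‖ ^ 2) := by
    apply intervalIntegral.norm_integral_le_of_norm_le ht
    · refine Filter.Eventually.of_forall fun s hs => ?_
      have hs0 : 0 ≤ s := hs.1.le
      obtain ⟨hk0, hk1⟩ := hkp01 s hs0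
      obtain ⟨hb0, hb1⟩ := hkp'b s hs0
      have hl2 : 0 ≤ ‖ℓ s‖ ^ 2 := by positivity
      have hin := abs_real_inner_le_norm (h₁ - h s) (ℓ s)
      have hA : kp' s * |⟪h₁ - h s, ℓ s⟫| ≤
          kp' s * (‖h₁ - h₀‖ ^ 2 + TI * L) + M / 2 * ‖ℓ s‖ ^ 2 := by
        rcases le_total TI s with hT | hT
        · rw [hkp'T s hT]; simp only [zero_mul, zero_add]; positivity
        · have hc := cs_aux ℓ hℓc s hs0
          have hmono : ∫ x in (0:ℝ)..s, ‖ℓ x‖ ^ 2 ≤ L := by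
            apply intervalIntegral.integral_mono_interval le_rfl hs0 hs.2
            · exact Filter.Eventually.of_forall fun x => by positivity
            · exact Continuous.intervalIntegrable (by fun_prop) _ _
          have hc2 : ‖∫ x in (0:ℝ)..s, ℓ x‖ ^ 2 ≤ TI * L :=
            hc.trans (mul_le_mul hT hmono
              (intervalIntegral.integral_nonneg hs0 fun x _ => by positivity) hTI.le)
          have hn : ‖h₁ - h s‖ ≤ ‖h₁ - h₀‖ + ‖∫ x in (0:ℝ)..s, ℓ x‖ := by
            rw [hh s, ← sub_sub]; exact norm_sub_le _ _
          have hn2 : ‖h₁ - h s‖ ^ 2 ≤ 2 * ‖h₁ - h₀‖ ^ 2 + 2 * (TI * L) := by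
            have := pow_le_pow_left₀ (norm_nonneg _) hn 2
            nlinarith [sq_nonneg (‖h₁ - h₀‖ - ‖∫ x in (0:ℝ)..s, ℓ x‖)]
          have h6 : |⟪h₁ - h s, ℓ s⟫| ≤ (‖h₁ - h₀‖ ^ 2 + TI * L) + ‖ℓ s‖ ^ 2 / 2 := by
            nlinarith [sq_nonneg (‖h₁ - h s‖ - ‖ℓ s‖)]
          have h7 := mul_le_mul_of_nonneg_left h6 hb0
          have h8 := mul_le_mul_of_nonneg_right hb1 hl2
          nlinarith
      have hB : kp s * ‖ℓ s‖ ^ 2 ≤ ‖ℓ s‖ ^ 2 := mul_le_of_le_one_left hl2 hk1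
      rw [Real.norm_eq_abs]
      refine (abs_sub _ _).trans ?_
      rw [abs_mul, abs_of_nonneg hb0, abs_of_nonneg (mul_nonneg hk0 hl2)]
      linarith
    · exact Continuous.intervalIntegrable (by fun_prop) _ _
  rw [intervalIntegral.integral_add (Continuous.intervalIntegrable (by fun_prop) _ _)
    (Continuous.intervalIntegrable (by fun_prop) _ _), intervalIntegral.integral_mul_const,
    intervalIntegral.integral_const_mul, hK, hkp0, sub_zero, ← hL, Real.norm_eq_abs] at hR
  obtain ⟨hk0, hk1⟩ := hkp01 t ht
  have hl2 : 0 ≤ ‖ℓ t‖ ^ 2 := by positivity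
  have ha2 : 0 ≤ ‖h₁ - h₀‖ ^ 2 := by positivity
  have hP0 : 0 ≤ kp t * ‖h₁ - h t‖ ^ 2 := by positivity
  have hGt : |kp t * ⟪h₁ - h t, ℓ t⟫| ≤ kp t * ‖h₁ - h t‖ ^ 2 + ‖ℓ t‖ ^ 2 := by
    rw [abs_mul, abs_of_nonneg hk0]
    have hin := abs_real_inner_le_norm (h₁ - h t) (ℓ t)
    have h6 : |⟪h₁ - h t, ℓ t⟫| ≤ ‖h₁ - h t‖ ^ 2 + ‖ℓ t‖ ^ 2 := by
      nlinarith [sq_nonneg (‖h₁ - h t‖ - ‖ℓ t‖), sq_nonneg ‖h₁ - h t‖]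
    have h7 := mul_le_mul_of_nonneg_left h6 hk0
    have h8 : kp t * ‖ℓ t‖ ^ 2 ≤ ‖ℓ t‖ ^ 2 := mul_le_of_le_one_left hl2 hk1
    linarith
  have hTL : 0 ≤ TI * L := by positivity
  have h9 : kp t * (‖h₁ - h₀‖ ^ 2 + TI * L) ≤ ‖h₁ - h₀‖ ^ 2 + TI * L :=
    mul_le_of_le_one_left (by positivity) hk1
  rw [hsplit]
  refine (abs_sub _ _).trans ?_
  have e1 : 0 ≤ (TI + M + 1) * (‖h₁ - h₀‖ ^ 2 + kp t * ‖h₁ - h t‖ ^ 2 + ‖ℓ t‖ ^ 2) := by positivity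
  have e2 : 0 ≤ M * L := by positivity
  nlinarith
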